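/- arXiv:2305.05275 — 4 statements merged into one kernel-verified Lean document; each statement's English description precedes it below -/
import Mathlib

section
/- Let P be a polytope fulfilling the rhombus criterion and let F be a face of P. Then for any vertices α, β of F that have witnesses α', β' of the rhombus criterion in P, the witnesses α' and β' belong to F; consequently F fulfills the rhombus criterion. -/
/-- A pair of vertices (extreme points) `α, β` of `P` fulfills the rhombus criterion if
`conv(α,β)` is an edge (a face) of `P` or there are witnesses `α', β'` with
`α + β = α' + β'`.  `P` fulfills the rhombus criterion if every pair of its vertices does. -/
def FulfillsRhombus {E : Type*} [NormedAddCommGroup E] [NormedSpace ℝ E] (P : Set E) : Prop :=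
  ∀ α ∈ Set.extremePoints ℝ P, ∀ β ∈ Set.extremePoints ℝ P, α ≠ β →
    IsExposed ℝ P (segment ℝ α β) ∨
      ∃ α' ∈ Set.extremePoints ℝ P, ∃ β' ∈ Set.extremePoints ℝ P,
        α' ≠ α ∧ α' ≠ β ∧ β' ≠ α ∧ β' ≠ β ∧ α + β = α' + β'

theorem IsExposed.mem_and_mem_of_add_eq_add {E : Type*} [NormedAddCommGroup E] [NormedSpace ℝ E]
    {P F : Set E} (hF : IsExposed ℝ P F) {a b x y : E} (ha : a ∈ F) (hb : b ∈ F)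
    (hx : x ∈ P) (hy : y ∈ P) (h : a + b = x + y) : x ∈ F ∧ y ∈ F := by
  obtain ⟨l, rfl⟩ := hF ⟨a, ha⟩
  have hl : l a + l b = l x + l y := by rw [← map_add, h, map_add]
  refine ⟨⟨hx, fun z hz => ?_⟩, ⟨hy, fun z hz => ?_⟩⟩
  · linarith [ha.2 z hz, hb.2 y hy]
  · linarith [ha.2 z hz, hb.2 x hx]

theorem stmt_3 {d : ℕ} (P F : Set (EuclideanSpace ℝ (Fin d)))
    (hP : ∃ S : Finset (EuclideanSpace ℝ (Fin d)), P = convexHull ℝ ↑S)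
    (hRh : FulfillsRhombus P) (hF : IsExposed ℝ P F) :
    (∀ α ∈ Set.extremePoints ℝ F, ∀ β ∈ Set.extremePoints ℝ F,
      ∀ α' ∈ Set.extremePoints ℝ P, ∀ β' ∈ Set.extremePoints ℝ P,
        α' ≠ α → α' ≠ β → β' ≠ α → β' ≠ β → α + β = α' + β' →
          α' ∈ F ∧ β' ∈ F) ∧
    FulfillsRhombus F := by
  have witnesses_mem : ∀ α ∈ Set.extremePoints ℝ F, ∀ β ∈ Set.extremePoints ℝ F,
      ∀ α' ∈ Set.extremePoints ℝ P, ∀ β' ∈ Set.extremePoints ℝ P,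
        α + β = α' + β' → α' ∈ F ∧ β' ∈ F := fun α hα β hβ α' hα' β' hβ' h =>
    hF.mem_and_mem_of_add_eq_add hα.1 hβ.1 hα'.1 hβ'.1 h
  refine ⟨fun α hα β hβ α' hα' β' hβ' _ _ _ _ h =>
    witnesses_mem α hα β hβ α' hα' β' hβ' h, fun α hα β hβ hne => ?_⟩
  have hPconv : Convex ℝ P := by
    obtain ⟨S, rfl⟩ := hP
    exact convex_convexHull ℝ _
  have hext := hF.isExtreme.extremePoints_eq
  rcases hRh α (hext ▸ hα).2 β (hext ▸ hβ).2 hne with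
    hedge | ⟨α', hα', β', hβ', h₁, h₂, h₃, h₄, h⟩
  · exact .inl (hedge.mono hF.subset ((hF.convex hPconv).segment_subset hα.1 hβ.1))
  · obtain ⟨hα'F, hβ'F⟩ := witnesses_mem α hα β hβ α' hα' β' hβ' h
    exact .inr ⟨α', hext ▸ ⟨hα'F, hα'⟩, β', hext ▸ ⟨hβ'F, hβ'⟩, h₁, h₂, h₃, h₄, h⟩
end

section
/- If a polytope P fulfills the rhombus criterion, then every 2-dimensional face F of P is either a triangle (F has exactly 3 vertices), or F has exactly 4 vertices which can be labeled α, β, α', β' so that α + β = α' + β' (a rhombus, i.e., a parallelogram). -/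
/-- An extreme point of a convex set that lies in a triangle with corners in the set is one of
the corners. -/
theorem eq_corner_of_mem_extremePoints {E : Type*} [AddCommGroup E] [Module ℝ E] {F : Set E}
    (hF : Convex ℝ F) {p q r s : E} (hp : p ∈ F.extremePoints ℝ) (hq : q ∈ F) (hr : r ∈ F)
    (hs : s ∈ F) {a b c : ℝ} (ha : 0 ≤ a) (hb : 0 ≤ b) (hc : 0 ≤ c) (habc : a + b + c = 1)
    (h : p = a • q + b • r + c • s) : p = q ∨ p = r ∨ p = s := by
  have hsub : convexHull ℝ {q, r, s} ⊆ F :=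
    convexHull_min (by simp [Set.insert_subset_iff, hq, hr, hs]) hF
  have hmem : p ∈ convexHull ℝ {q, r, s} := by
    have hcv := convex_convexHull ℝ ({q, r, s} : Set E)
    have hsum := hcv.sum_mem (t := Finset.univ) (w := ![a, b, c]) (z := ![q, r, s])
      (by intro i _; fin_cases i <;> assumption)
      (by simpa [Fin.sum_univ_three] using habc)
      (by intro i _; fin_cases i <;> exact subset_convexHull ℝ _ (by simp))
    simpa [Fin.sum_univ_three, h] using hsum
  simpa using extremePoints_convexHull_subset
    (inter_extremePoints_subset_extremePoints_of_subset hsub ⟨hmem, hp⟩)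

/-- Coordinate form of `eq_corner_of_mem_extremePoints` with respect to an affine frame. -/
theorem coord_eq_corner_of_mem_extremePoints {E : Type*} [AddCommGroup E] [Module ℝ E] {F : Set E}
    (hF : Convex ℝ F) {o a b : E}
    (hind : ∀ x y x' y' : ℝ, o + x • a + y • b = o + x' • a + y' • b → x = x' ∧ y = y')
    {x y x₁ y₁ x₂ y₂ x₃ y₃ : ℝ} (hp : o + x • a + y • b ∈ F.extremePoints ℝ)
    (h₁ : o + x₁ • a + y₁ • b ∈ F) (h₂ : o + x₂ • a + y₂ • b ∈ F) (h₃ : o + x₃ • a + y₃ • b ∈ F)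
    (r s t : ℝ) (hr : 0 ≤ r) (hs : 0 ≤ s) (ht : 0 ≤ t) (hrst : r + s + t = 1)
    (hx : x = r * x₁ + s * x₂ + t * x₃) (hy : y = r * y₁ + s * y₂ + t * y₃) :
    (x = x₁ ∧ y = y₁) ∨ (x = x₂ ∧ y = y₂) ∨ (x = x₃ ∧ y = y₃) := by
  have key := eq_corner_of_mem_extremePoints hF hp h₁ h₂ h₃ hr hs ht hrst <| by
    rw [hx, hy]
    obtain rfl : r = 1 - s - t := by linarith
    module
  exact key.imp (hind _ _ _ _) (Or.imp (hind _ _ _ _) (hind _ _ _ _))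

/-- With respect to an affine frame `o, o + a, o + b` of vertices whose cone contains all
vertices, no vertex besides `o + a + b` can lie beyond the edge `o + a, o + a + b`. -/
theorem not_mem_extremePoints_of_one_lt {E : Type*} [AddCommGroup E] [Module ℝ E]
    {F : Set E} (hF : Convex ℝ F) {o a b : E}
    (hind : ∀ x y x' y' : ℝ, o + x • a + y • b = o + x' • a + y' • b → x = x' ∧ y = y')
    (ho : o ∈ F.extremePoints ℝ) (ha : o + a ∈ F.extremePoints ℝ) (hb : o + b ∈ F.extremePoints ℝ)
    (hcone : ∀ w ∈ F.extremePoints ℝ, ∃ x y : ℝ, 0 ≤ x ∧ 0 ≤ y ∧ w = o + x • a + y • b)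
    (hRh : ∀ α ∈ F.extremePoints ℝ, ∀ β ∈ F.extremePoints ℝ, α ≠ β →
      IsExtreme ℝ F (segment ℝ α β) ∨
        ∃ α' ∈ F.extremePoints ℝ, ∃ β' ∈ F.extremePoints ℝ,
          α' ≠ α ∧ α' ≠ β ∧ β' ≠ α ∧ β' ≠ β ∧ α + β = α' + β')
    {x y : ℝ} (hx : 1 < x) (hy : 0 < y) (hy1 : y < 1) :
    o + x • a + y • b ∉ F.extremePoints ℝ := by
  intro hw
  have ho' : o + (0 : ℝ) • a + (0 : ℝ) • b ∈ F := by simpa using ho.1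
  have hb' : o + (0 : ℝ) • a + (1 : ℝ) • b ∈ F := by simpa using hb.1
  have hne : o ≠ o + x • a + y • b := by
    intro h
    have := hind 0 0 x y (by simpa using h)
    linarith
  have key : ∀ p₁ p₂ : ℝ, 0 ≤ p₁ → 0 ≤ p₂ → p₁ ≤ x → p₂ ≤ y → p₁ * y ≤ p₂ * x →
      o + p₁ • a + p₂ • b ∈ F.extremePoints ℝ →
      o + p₁ • a + p₂ • b ≠ o → o + p₁ • a + p₂ • b = o + x • a + y • b := by
    intro p₁ p₂ h1 h2 h3 h4 h5 hp hpo
    have hx0 : 0 < x := by linarith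
    have hq : p₁ / x ≤ 1 := (div_le_one hx0).2 h3
    have hq0 : 0 ≤ p₁ / x := by positivity
    have hs : 0 ≤ p₂ - p₁ / x * y := by
      have : p₁ / x * y ≤ p₂ := by
        rw [div_mul_eq_mul_div, div_le_iff₀ hx0]; exact h5
      linarith
    rcases coord_eq_corner_of_mem_extremePoints hF hind hp ho' hb' hw.1
      (1 - (p₂ - p₁ / x * y) - p₁ / x) (p₂ - p₁ / x * y) (p₁ / x) (by nlinarith) hs hq0 (by ring)
      (by field_simp; ring) (by ring) with h | h | h
    · exact absurd (by simp [h.1, h.2]) hpo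
    · linarith
    · rw [h.1, h.2]
  rcases hRh _ ho _ hw hne with hE | ⟨p, hp, q, hq, hpo, hpw, hqo, hqw, hsum⟩
  · have hxy : 0 < x + y := by linarith
    have hmem : o + (x / (x + y)) • a + (y / (x + y)) • b ∈
        segment ℝ o (o + x • a + y • b) := by
      refine ⟨1 - 1 / (x + y), 1 / (x + y), ?_, by positivity, by ring, ?_⟩
      · have : 1 / (x + y) ≤ 1 := (div_le_one hxy).2 (by linarith)
        linarith
      · match_scalars <;> field_simp
        ring
    have hopen : o + (x / (x + y)) • a + (y / (x + y)) • b ∈ openSegment ℝ (o + a) (o + b) := by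
      refine ⟨x / (x + y), y / (x + y), by positivity, by positivity, by field_simp, ?_⟩
      match_scalars <;> field_simp
    obtain ⟨r, s, hr, hs, hrs, h⟩ := hE.left_mem_of_mem_openSegment ha.1 hb.1 hmem hopen
    have := hind (s * x) (s * y) 1 0 (by
      obtain rfl : r = 1 - s := by linarith
      rw [one_smul, zero_smul, add_zero, ← h]; module)
    have hs0 : s = 0 := by
      rcases mul_eq_zero.1 this.2 with h | h
      · exact h
      · linarith
    simp [hs0] at this
  · obtain ⟨p₁, p₂, hp1, hp2, rfl⟩ := hcone p hp
    obtain ⟨q₁, q₂, hq1, hq2, rfl⟩ := hcone q hq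
    have hs := hind x y (p₁ + q₁) (p₂ + q₂) (by
      have : o + x • a + y • b = (o + p₁ • a + p₂ • b + (o + q₁ • a + q₂ • b)) - o := by
        rw [← hsum]; abel
      rw [this]; module)
    rcases le_total (p₁ * y) (p₂ * x) with h | h
    · exact hpw (key p₁ p₂ hp1 hp2 (by linarith) (by linarith) h hp hpo)
    · refine hqw (key q₁ q₂ hq1 hq2 (by linarith) (by linarith) ?_ hq hqo)
      rw [hs.1, hs.2] at *
      nlinarith

/-- A convex set fulfilling the rhombus criterion whose vertices lie in the cone spanned by an
affine frame `o, o + a, o + b` of vertices is a triangle or a parallelogram. -/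
theorem extremePoints_eq_of_cone {E : Type*} [AddCommGroup E] [Module ℝ E]
    {F : Set E} (hF : Convex ℝ F) {o a b : E}
    (hind : ∀ x y x' y' : ℝ, o + x • a + y • b = o + x' • a + y' • b → x = x' ∧ y = y')
    (ho : o ∈ F.extremePoints ℝ) (ha : o + a ∈ F.extremePoints ℝ) (hb : o + b ∈ F.extremePoints ℝ)
    (hcone : ∀ w ∈ F.extremePoints ℝ, ∃ x y : ℝ, 0 ≤ x ∧ 0 ≤ y ∧ w = o + x • a + y • b)
    (hRh : ∀ α ∈ F.extremePoints ℝ, ∀ β ∈ F.extremePoints ℝ, α ≠ β →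
      IsExtreme ℝ F (segment ℝ α β) ∨
        ∃ α' ∈ F.extremePoints ℝ, ∃ β' ∈ F.extremePoints ℝ,
          α' ≠ α ∧ α' ≠ β ∧ β' ≠ α ∧ β' ≠ β ∧ α + β = α' + β') :
    F.extremePoints ℝ = {o, o + a, o + b} ∨
      F.extremePoints ℝ = {o, o + a + b, o + a, o + b} := by
  have ho' : o + (0 : ℝ) • a + (0 : ℝ) • b ∈ F.extremePoints ℝ := by simpa using ho
  have ha' : o + (1 : ℝ) • a + (0 : ℝ) • b ∈ F.extremePoints ℝ := by simpa using ha
  have hb' : o + (0 : ℝ) • a + (1 : ℝ) • b ∈ F.extremePoints ℝ := by simpa using hb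
  have hpos : ∀ x y : ℝ, 0 ≤ x → 0 ≤ y → o + x • a + y • b ∈ F.extremePoints ℝ →
      ¬ (x = 0 ∧ y = 0) → ¬ (x = 1 ∧ y = 0) → ¬ (x = 0 ∧ y = 1) →
      0 < x ∧ 0 < y ∧ 1 < x + y := by
    intro x y hx hy hw h0 h1 h2
    have hsum : 1 < x + y := by
      by_contra hle
      rcases coord_eq_corner_of_mem_extremePoints hF hind hw ho'.1 ha'.1 hb'.1
        (1 - x - y) x y (by linarith) hx hy (by ring) (by ring) (by ring) with h | h | h <;> tauto
    refine ⟨lt_of_le_of_ne hx ?_, lt_of_le_of_ne hy ?_, hsum⟩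
    · rintro rfl
      have hy0 : 0 < y := by linarith
      rcases coord_eq_corner_of_mem_extremePoints hF hind hb' ho'.1 hw.1 hw.1
        (1 - 1 / y) (1 / y) 0 (by
          have : 1 / y ≤ 1 := (div_le_one hy0).2 (by linarith)
          linarith) (by positivity) le_rfl (by ring) (by ring) (by field_simp; ring)
        with h | h | h
      · linarith
      · exact h2 ⟨rfl, h.2.symm⟩
      · exact h2 ⟨rfl, h.2.symm⟩
    · rintro rfl
      have hx0 : 0 < x := by linarith
      rcases coord_eq_corner_of_mem_extremePoints hF hind ha' ho'.1 hw.1 hw.1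
        (1 - 1 / x) (1 / x) 0 (by
          have : 1 / x ≤ 1 := (div_le_one hx0).2 (by linarith)
          linarith) (by positivity) le_rfl (by ring) (by field_simp; ring) (by ring)
        with h | h | h
      · linarith
      · exact h1 ⟨h.1.symm, rfl⟩
      · exact h1 ⟨h.1.symm, rfl⟩
  have hab : o + a ≠ o + b := by
    intro h
    have := hind 1 0 0 1 (by simpa using h)
    linarith
  rcases hRh _ ha _ hb hab with hE | ⟨p, hp, q, hq, hpa, hpb, hqa, hqb, hsum⟩
  · left
    refine Set.Subset.antisymm (fun w hw => ?_) (by simp [Set.insert_subset_iff, ho, ha, hb])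
    obtain ⟨x, y, hx, hy, rfl⟩ := hcone w hw
    by_contra hne
    simp only [Set.mem_insert_iff, Set.mem_singleton_iff, not_or] at hne
    obtain ⟨hx0, hy0, hxy⟩ := hpos x y hx hy hw (fun h => hne.1 (by simp [h.1, h.2]))
      (fun h => hne.2.1 (by simp [h.1, h.2])) (fun h => hne.2.2 (by simp [h.1, h.2]))
    have hxy0 : 0 < x + y := by linarith
    have hmem : o + (x / (x + y)) • a + (y / (x + y)) • b ∈ segment ℝ (o + a) (o + b) := by
      refine ⟨x / (x + y), y / (x + y), by positivity, by positivity, by field_simp, ?_⟩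
      match_scalars <;> field_simp
    have hopen : o + (x / (x + y)) • a + (y / (x + y)) • b ∈
        openSegment ℝ o (o + x • a + y • b) := by
      refine ⟨1 - 1 / (x + y), 1 / (x + y), ?_, by positivity, by ring, ?_⟩
      · have : 1 / (x + y) < 1 := (div_lt_one hxy0).2 (by linarith)
        linarith
      · match_scalars <;> field_simp
        ring
    obtain ⟨r, s, hr, hs, hrs, h⟩ := hE.left_mem_of_mem_openSegment ho.1 hw.1 hmem hopen
    have := hind r s 0 0 (by
      obtain rfl : r = 1 - s := by linarith
      rw [zero_smul, zero_smul, add_zero, add_zero]; refine Eq.trans ?_ h; module)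
    linarith
  · right
    have hD : o + (1 : ℝ) • a + (1 : ℝ) • b ∈ F.extremePoints ℝ := by
      have hone : ∀ z, o + a + (o + b) = o + z → z = o + (1 : ℝ) • a + (1 : ℝ) • b := by
        intro z hz
        have : z = o + a + (o + b) - o := by rw [hz]; abel
        rw [this]; module
      by_cases hpo : p = o
      · subst hpo
        rwa [← hone q hsum]
      by_cases hqo : q = o
      · subst hqo
        rwa [← hone p (by rw [hsum, add_comm])]
      obtain ⟨p₁, p₂, hp1, hp2, rfl⟩ := hcone p hp
      obtain ⟨q₁, q₂, hq1, hq2, rfl⟩ := hcone q hq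
      have hs := hind 1 1 (p₁ + q₁) (p₂ + q₂) (by
        have : o + (1 : ℝ) • a + (1 : ℝ) • b =
            (o + p₁ • a + p₂ • b + (o + q₁ • a + q₂ • b)) - o := by
          rw [← hsum]; module
        rw [this]; module)
      have h1 := hpos p₁ p₂ hp1 hp2 hp (fun h => hpo (by simp [h.1, h.2]))
        (fun h => hpa (by simp [h.1, h.2])) (fun h => hpb (by simp [h.1, h.2]))
      have h2 := hpos q₁ q₂ hq1 hq2 hq (fun h => hqo (by simp [h.1, h.2]))
        (fun h => hqa (by simp [h.1, h.2])) (fun h => hqb (by simp [h.1, h.2]))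
      linarith
    refine Set.Subset.antisymm (fun w hw => ?_) (by
      simpa [Set.insert_subset_iff, ho, ha, hb] using hD)
    obtain ⟨x, y, hx, hy, rfl⟩ := hcone w hw
    by_contra hne
    simp only [Set.mem_insert_iff, Set.mem_singleton_iff, not_or] at hne
    obtain ⟨hx0, hy0, hxy⟩ := hpos x y hx hy hw (fun h => hne.1 (by simp [h.1, h.2]))
      (fun h => hne.2.2.1 (by simp [h.1, h.2])) (fun h => hne.2.2.2 (by simp [h.1, h.2]))
    have hne1 : ¬ (x = 1 ∧ y = 1) := fun h => hne.2.1 (by simp [h.1, h.2])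
    rcases le_or_gt x 1 with hx1 | hx1 <;> rcases le_or_gt y 1 with hy1 | hy1
    · rcases coord_eq_corner_of_mem_extremePoints hF hind hw ha'.1 hb'.1 hD.1
        (1 - y) (1 - x) (x + y - 1) (by linarith) (by linarith) (by linarith) (by ring)
        (by ring) (by ring) with h | h | h
      · linarith
      · linarith
      · exact hne1 h
    · rcases hx1.eq_or_lt with rfl | hx1
      · rcases coord_eq_corner_of_mem_extremePoints hF hind hD ha'.1 hw.1 hw.1
          (1 - 1 / y) (1 / y) 0 (by
            have : 1 / y ≤ 1 := (div_le_one hy0).2 (by linarith)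
            linarith) (by positivity) le_rfl (by ring) (by field_simp; ring) (by field_simp; ring)
          with h | h | h <;> linarith
      · refine not_mem_extremePoints_of_one_lt hF (o := o) (a := b) (b := a)
          (fun x y x' y' h => (hind y x y' x' ?_).symm) ho hb ha ?_ hRh hy1 hx0 hx1 ?_
        · rw [add_right_comm, h, add_right_comm]
        · intro w hw
          obtain ⟨x, y, hx, hy, rfl⟩ := hcone w hw
          exact ⟨y, x, hy, hx, add_right_comm _ _ _⟩
        · rwa [add_right_comm]
    · rcases hy1.eq_or_lt with rfl | hy1
      · rcases coord_eq_corner_of_mem_extremePoints hF hind hD hb'.1 hw.1 hw.1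
          (1 - 1 / x) (1 / x) 0 (by
            have : 1 / x ≤ 1 := (div_le_one hx0).2 (by linarith)
            linarith) (by positivity) le_rfl (by ring) (by field_simp; ring) (by field_simp; ring)
          with h | h | h <;> linarith
      · exact not_mem_extremePoints_of_one_lt hF hind ho ha hb hcone hRh hx1 hy0 hy1 hw
    · have hd : 0 < x + y - 1 := by linarith
      have ht : 0 < 1 / (x + y - 1) := by positivity
      rcases coord_eq_corner_of_mem_extremePoints hF hind hD ha'.1 hb'.1 hw.1
        ((y - 1) / (x + y - 1)) ((x - 1) / (x + y - 1)) (1 / (x + y - 1))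
        (div_nonneg (by linarith) hd.le) (div_nonneg (by linarith) hd.le) ht.le
        (by field_simp; ring) (by field_simp; ring) (by field_simp; ring) with h | h | h <;>
        linarith

/-- A finite set of points in an inner product space with planar span has a point `o` and two
further points `u`, `v` such that the whole set lies in the cone at `o` spanned by `u` and `v`. -/
theorem exists_cone_of_finrank_eq_two {E : Type*} [NormedAddCommGroup E] [InnerProductSpace ℝ E]
    {V : Set E} (hV : V.Finite) (hdim : Module.finrank ℝ (vectorSpan ℝ V) = 2) :
    ∃ o a b : E, o ∈ V ∧ o + a ∈ V ∧ o + b ∈ V ∧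
      (∀ x y x' y' : ℝ, o + x • a + y • b = o + x' • a + y' • b → x = x' ∧ y = y') ∧
      ∀ w ∈ V, ∃ x y : ℝ, 0 ≤ x ∧ 0 ≤ y ∧ w = o + x • a + y • b := by
  have hne : V.Nonempty := by
    rw [Set.nonempty_iff_ne_empty]
    rintro rfl
    rw [vectorSpan_empty, finrank_bot] at hdim
    norm_num at hdim
  obtain ⟨o, ho, hmax⟩ := V.exists_max_image (fun v => ‖v‖) hV hne
  have hspan : vectorSpan ℝ V = Submodule.span ℝ ((· -ᵥ o) '' V) :=
    vectorSpan_eq_span_vsub_set_right ℝ ho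
  have hsub : ∀ v ∈ V, v - o ∈ vectorSpan ℝ V := fun v hv => vsub_mem_vectorSpan ℝ hv ho
  let l : E →ₗ[ℝ] ℝ := -(innerₗ E o)
  have hl : ∀ v ∈ V, v ≠ o → 0 < l (v - o) := by
    intro v hv hvo
    have h1 : 0 < ‖v - o‖ := norm_pos_iff.2 (sub_ne_zero.2 hvo)
    have h2 := norm_sub_sq_real v o
    have h3 : ‖v‖ ≤ ‖o‖ := hmax v hv
    have h4 : ‖v‖ ^ 2 ≤ ‖o‖ ^ 2 := by gcongr
    have h5 : l (v - o) = ‖o‖ ^ 2 - inner ℝ v o := by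
      simp [l, inner_sub_right, real_inner_comm]
    rw [h5]
    nlinarith [sq_pos_of_pos h1]
  have : FiniteDimensional ℝ (vectorSpan ℝ V) := Module.finite_of_finrank_eq_succ hdim
  obtain ⟨e, heW, he0, hle, hker⟩ : ∃ e ∈ vectorSpan ℝ V, e ≠ 0 ∧ l e = 0 ∧
      ∀ w ∈ vectorSpan ℝ V, l w = 0 → ∃ c : ℝ, w = c • e := by
    let f := l.domRestrict (vectorSpan ℝ V)
    have hf : f ≠ 0 := by
      intro hf
      have hall : ∀ v ∈ V, v = o := by
        intro v hv
        by_contra hvo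
        have : f ⟨v - o, hsub v hv⟩ = 0 := by rw [hf]; rfl
        exact (hl v hv hvo).ne' this
      have : vectorSpan ℝ V = ⊥ := vectorSpan_of_subsingleton ℝ
        fun v hv w hw => (hall v hv).trans (hall w hw).symm
      rw [this] at hdim
      rw [finrank_bot] at hdim
      norm_num at hdim
    have hk : Module.finrank ℝ (LinearMap.ker f) = 1 := by
      have hrk := f.finrank_range_add_finrank_ker
      rw [LinearMap.range_eq_top.2 (LinearMap.surjective hf)] at hrk
      simp only [finrank_top, Module.finrank_self] at hrk
      omega
    obtain ⟨e, he, hspan⟩ := finrank_eq_one_iff'.1 hk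
    refine ⟨e, e.1.2, by simpa using he, e.2, fun w hw hlw => ?_⟩
    obtain ⟨c, hc⟩ := hspan ⟨⟨w, hw⟩, hlw⟩
    exact ⟨c, by simpa using (congrArg (fun z => (z.1 : E)) hc).symm⟩
  let m : E →ₗ[ℝ] ℝ := innerₗ E e
  have hme : m e ≠ 0 := by simpa [m] using he0
  have hmr : ∀ r : ℝ, ¬ ∀ v ∈ V, v ≠ o → m (v - o) = r * l (v - o) := by
    intro r h
    have hle' : vectorSpan ℝ V ≤ LinearMap.ker (m - r • l) := by
      rw [hspan, Submodule.span_le]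
      rintro _ ⟨v, hv, rfl⟩
      by_cases hvo : v = o
      · simp [hvo]
      · simpa [sub_eq_zero] using h v hv hvo
    have := hle' heW
    simp [hle] at this
    exact hme this
  have hinj : ∀ w ∈ vectorSpan ℝ V, l w = 0 → m w = 0 → w = 0 := by
    intro w hw hlw hmw
    obtain ⟨c, rfl⟩ := hker w hw hlw
    have : c = 0 := by simpa [hme] using hmw
    simp [this]
  have hfin : (V \ {o}).Finite := hV.subset Set.sdiff_subset
  have hne' : (V \ {o}).Nonempty := by
    by_contra hemp
    refine hmr 0 fun v hv hvo => absurd ⟨v, hv, hvo⟩ hemp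
  obtain ⟨u, ⟨hu, huo⟩, humin⟩ :=
    (V \ {o}).exists_min_image (fun v => m (v - o) / l (v - o)) hfin hne'
  obtain ⟨v, ⟨hv, hvo⟩, hvmax⟩ :=
    (V \ {o}).exists_max_image (fun v => m (v - o) / l (v - o)) hfin hne'
  have hlu := hl u hu huo
  have hlv := hl v hv hvo
  have hmin : ∀ w ∈ V, m (u - o) * l (w - o) ≤ m (w - o) * l (u - o) := by
    intro w hw
    by_cases hwo : w = o
    · simp [hwo]
    · exact (div_le_div_iff₀ hlu (hl w hw hwo)).1 (humin w ⟨hw, hwo⟩)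
  have hmax' : ∀ w ∈ V, m (w - o) * l (v - o) ≤ m (v - o) * l (w - o) := by
    intro w hw
    by_cases hwo : w = o
    · simp [hwo]
    · exact (div_le_div_iff₀ (hl w hw hwo) hlv).1 (hvmax w ⟨hw, hwo⟩)
  have hdet : 0 < m (v - o) * l (u - o) - m (u - o) * l (v - o) := by
    refine lt_of_le_of_ne (by linarith [hmin v hv]) fun h => hmr (m (u - o) / l (u - o)) ?_
    intro w hw hwo
    have h1 : m (u - o) / l (u - o) = m (v - o) / l (v - o) := by
      rw [div_eq_div_iff hlu.ne' hlv.ne']; linarith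
    have h2 := humin w ⟨hw, hwo⟩
    have h3 := hvmax w ⟨hw, hwo⟩
    rw [← div_eq_iff (hl w hw hwo).ne']
    exact le_antisymm (h1 ▸ h3) h2
  refine ⟨o, u - o, v - o, ho, by simpa using hu, by simpa using hv, ?_, ?_⟩
  · intro x y x' y' h
    have h' : x • (u - o) + y • (v - o) = x' • (u - o) + y' • (v - o) := by
      simpa [add_assoc] using h
    have hL := congrArg l h'
    have hM := congrArg m h'
    simp only [map_add, map_smul, smul_eq_mul] at hL hM
    generalize l (u - o) = p at *
    generalize l (v - o) = q at *
    generalize m (u - o) = r at *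
    generalize m (v - o) = s at *
    constructor
    · refine mul_right_cancel₀ hdet.ne' ?_
      linear_combination s * hL - q * hM
    · refine mul_right_cancel₀ hdet.ne' ?_
      linear_combination p * hM - r * hL
  · intro w hw
    refine ⟨(m (v - o) * l (w - o) - m (w - o) * l (v - o)) /
        (m (v - o) * l (u - o) - m (u - o) * l (v - o)),
      (m (w - o) * l (u - o) - m (u - o) * l (w - o)) /
        (m (v - o) * l (u - o) - m (u - o) * l (v - o)),
      div_nonneg (by linarith [hmax' w hw]) hdet.le,
      div_nonneg (by linarith [hmin w hw]) hdet.le, ?_⟩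
    rw [add_assoc, ← sub_eq_iff_eq_add', ← sub_eq_zero]
    have hd := hdet.ne'
    refine hinj _ (sub_mem (hsub w hw) (add_mem (Submodule.smul_mem _ _ (hsub u hu))
      (Submodule.smul_mem _ _ (hsub v hv)))) ?_ ?_ <;>
    · rw [map_sub, map_add, map_smul, map_smul, smul_eq_mul, smul_eq_mul, sub_eq_zero,
        div_mul_eq_mul_div, div_mul_eq_mul_div, ← add_div, eq_div_iff hd]
      ring

theorem stmt_4 {d : ℕ} (P : Set (EuclideanSpace ℝ (Fin d)))
    (hP : ∃ S : Finset (EuclideanSpace ℝ (Fin d)), P = convexHull ℝ ↑S)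
    (hRh : FulfillsRhombus P)
    (F : Set (EuclideanSpace ℝ (Fin d))) (hF : IsExposed ℝ P F)
    (hdim : Module.finrank ℝ (vectorSpan ℝ F) = 2) :
    (∃ s : Finset (EuclideanSpace ℝ (Fin d)), ↑s = Set.extremePoints ℝ F ∧ s.card = 3) ∨
    (∃ α β α' β' : EuclideanSpace ℝ (Fin d),
      Set.extremePoints ℝ F = {α, β, α', β'} ∧
      α ≠ β ∧ α ≠ α' ∧ α ≠ β' ∧ β ≠ α' ∧ β ≠ β' ∧ α' ≠ β' ∧
      α + β = α' + β') := by
  obtain ⟨S, rfl⟩ := hP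
  have hcomp : IsCompact F := hF.isCompact (S.finite_toSet.isCompact_convexHull ℝ)
  have hconv : Convex ℝ F := hF.convex (convex_convexHull ℝ _)
  have hext := hF.isExtreme
  have hfin : (F.extremePoints ℝ).Finite := S.finite_toSet.subset
    (hext.extremePoints_subset_extremePoints.trans extremePoints_convexHull_subset)
  have hhull : convexHull ℝ (F.extremePoints ℝ) = F := by
    rw [← (hfin.isClosed_convexHull ℝ).closure_eq]
    exact closure_convexHull_extremePoints hcomp hconv
  have hspan : vectorSpan ℝ F = vectorSpan ℝ (F.extremePoints ℝ) := by
    rw [← direction_affineSpan, ← direction_affineSpan, ← affineSpan_convexHull (F.extremePoints ℝ),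
      hhull]
  rw [hspan] at hdim
  obtain ⟨o, a, b, ho, ha, hb, hind, hcone⟩ := exists_cone_of_finrank_eq_two hfin hdim
  have hface : ∀ α ∈ F.extremePoints ℝ, ∀ β ∈ F.extremePoints ℝ, α ≠ β →
      IsExtreme ℝ F (segment ℝ α β) ∨
        ∃ α' ∈ F.extremePoints ℝ, ∃ β' ∈ F.extremePoints ℝ,
          α' ≠ α ∧ α' ≠ β ∧ β' ≠ α ∧ β' ≠ β ∧ α + β = α' + β' := by
    intro α hα β hβ hne
    rcases hRh α (hext.extremePoints_subset_extremePoints hα) β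
      (hext.extremePoints_subset_extremePoints hβ) hne with
      h | ⟨α', hα', β', hβ', h1, h2, h3, h4, hsum⟩
    · exact .inl (h.isExtreme.mono hF.subset (hconv.segment_subset hα.1 hβ.1))
    · have hmem : (1 / 2 : ℝ) • α + (1 / 2 : ℝ) • β ∈ F :=
        hconv hα.1 hβ.1 (by norm_num) (by norm_num) (by norm_num)
      have hopen : (1 / 2 : ℝ) • α + (1 / 2 : ℝ) • β ∈ openSegment ℝ α' β' :=
        ⟨1 / 2, 1 / 2, by norm_num, by norm_num, by norm_num, by
          rw [← smul_add, ← smul_add, hsum]⟩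
      rw [hext.extremePoints_eq]
      exact .inr ⟨α', ⟨hext.left_mem_of_mem_openSegment hα'.1 hβ'.1 hmem hopen, hα'⟩,
        β', ⟨hext.right_mem_of_mem_openSegment hα'.1 hβ'.1 hmem hopen, hβ'⟩, h1, h2, h3, h4, hsum⟩
  have hoa : o ≠ o + a := fun h => by simpa using hind 0 0 1 0 (by simpa using h)
  have hob : o ≠ o + b := fun h => by simpa using hind 0 0 0 1 (by simpa using h)
  have hab : o + a ≠ o + b := fun h => by simpa using hind 1 0 0 1 (by simpa using h)
  rcases extremePoints_eq_of_cone hconv hind ho ha hb hcone hface with h | h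
  · refine .inl ⟨{o, o + a, o + b}, by simp [h], Finset.card_eq_three.2 ?_⟩
    exact ⟨_, _, _, hoa, hob, hab, rfl⟩
  · refine .inr ⟨o, o + a + b, o + a, o + b, h, ?_, hoa, hob, ?_, ?_, hab, by abel⟩
    · exact fun h => by simpa using hind 0 0 1 1 (by simpa using h)
    · exact fun h => by simpa using hind 1 1 1 0 (by simpa using h)
    · exact fun h => by simpa using hind 1 1 0 1 (by simpa using h)
end

section
/- Let P ⊆ ℝ^d and Q ⊆ ℝ^e be polytopes. The product polytope P × Q ⊆ ℝ^{d+e} fulfills the rhombus criterion if and only if both P and Q fulfill the rhombus criterion. -/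
section

variable {E F : Type*} [NormedAddCommGroup E] [NormedSpace ℝ E]
  [NormedAddCommGroup F] [NormedSpace ℝ F]

/-- A pair of points `α, β` of `P` is an edge of `P`, or the diagonal of a nondegenerate rhombus
whose other diagonal joins two vertices of `P`. -/
def RhombusPair (P : Set E) (α β : E) : Prop :=
  IsExposed ℝ P (segment ℝ α β) ∨
    ∃ α' ∈ Set.extremePoints ℝ P, ∃ β' ∈ Set.extremePoints ℝ P,
      α' ≠ α ∧ α' ≠ β ∧ β' ≠ α ∧ β' ≠ β ∧ α + β = α' + β'

theorem IsExposed.image_continuousLinearEquiv {P A : Set E} (e : E ≃L[ℝ] F)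
    (h : IsExposed ℝ P A) : IsExposed ℝ (e '' P) (e '' A) := by
  intro hne
  obtain ⟨l, rfl⟩ := h hne.of_image
  refine ⟨l.comp (e.symm : F →L[ℝ] E), ?_⟩
  ext x
  constructor
  · rintro ⟨y, ⟨hy, hmax⟩, rfl⟩
    refine ⟨⟨y, hy, rfl⟩, ?_⟩
    rintro _ ⟨z, hz, rfl⟩
    simpa using hmax z hz
  · rintro ⟨⟨y, hy, rfl⟩, hmax⟩
    exact ⟨y, ⟨hy, fun z hz => by simpa using hmax (e z) ⟨z, hz, rfl⟩⟩, rfl⟩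

theorem RhombusPair.image_continuousLinearEquiv {P : Set E} {α β : E} (e : E ≃L[ℝ] F)
    (h : RhombusPair P α β) : RhombusPair (e '' P) (e α) (e β) := by
  rcases h with h | ⟨α', hα', β', hβ', h₁, h₂, h₃, h₄, hsum⟩
  · left
    have hseg : e '' segment ℝ α β = segment ℝ (e α) (e β) :=
      image_segment ℝ e.toLinearEquiv.toLinearMap.toAffineMap α β
    rw [← hseg]
    exact h.image_continuousLinearEquiv e
  · right
    have hext : ∀ x ∈ P.extremePoints ℝ, e x ∈ (e '' P).extremePoints ℝ := fun x hx => by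
      rw [← image_extremePoints e]
      exact ⟨x, hx, rfl⟩
    exact ⟨e α', hext _ hα', e β', hext _ hβ', e.injective.ne h₁, e.injective.ne h₂,
      e.injective.ne h₃, e.injective.ne h₄, by rw [← map_add, hsum, map_add]⟩

theorem RhombusPair.prod_swap {P : Set E} {Q : Set F} {α β : E × F}
    (h : RhombusPair (P ×ˢ Q) α β) : RhombusPair (Q ×ˢ P) α.swap β.swap := by
  have := h.image_continuousLinearEquiv (ContinuousLinearEquiv.prodComm ℝ E F)
  rwa [show (ContinuousLinearEquiv.prodComm ℝ E F) '' (P ×ˢ Q) = Q ×ˢ P from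
    Set.image_swap_prod P Q] at this

theorem FulfillsRhombus.prod_swap {P : Set E} {Q : Set F} (h : FulfillsRhombus (P ×ˢ Q)) :
    FulfillsRhombus (Q ×ˢ P) := by
  intro α hα β hβ hne
  rw [extremePoints_prod] at hα hβ
  refine RhombusPair.prod_swap (α := α.swap) (β := β.swap) (h _ ?_ _ ?_ ?_)
  · rw [extremePoints_prod]
    exact hα.symm
  · rw [extremePoints_prod]
    exact hβ.symm
  · exact Prod.swap_injective.ne hne

theorem IsExposed.prod {P A : Set E} {Q B : Set F} (hA : IsExposed ℝ P A)
    (hB : IsExposed ℝ Q B) : IsExposed ℝ (P ×ˢ Q) (A ×ˢ B) := by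
  rintro ⟨⟨a, b⟩, ha, hb⟩
  obtain ⟨l, rfl⟩ := hA ⟨a, ha⟩
  obtain ⟨m, rfl⟩ := hB ⟨b, hb⟩
  refine ⟨l.coprod m, ?_⟩
  ext ⟨x, y⟩
  constructor
  · rintro ⟨⟨hx, hxmax⟩, hy, hymax⟩
    exact ⟨⟨hx, hy⟩, fun z hz => add_le_add (hxmax _ hz.1) (hymax _ hz.2)⟩
  · rintro ⟨⟨hx, hy⟩, hmax⟩
    refine ⟨⟨hx, fun z hz => ?_⟩, hy, fun z hz => ?_⟩
    · simpa using hmax (z, y) ⟨hz, hy⟩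
    · simpa using hmax (x, z) ⟨hx, hz⟩

/-- Every vertex of a polytope is an exposed point. -/
theorem isExposed_singleton_of_mem_extremePoints_convexHull (S : Finset E) {q : E}
    (hq : q ∈ (convexHull ℝ (S : Set E)).extremePoints ℝ) :
    IsExposed ℝ (convexHull ℝ (S : Set E)) {q} := by
  intro _
  have hqS : q ∈ (S : Set E) := extremePoints_convexHull_subset hq
  have hnot : q ∉ convexHull ℝ ((S : Set E) \ {q}) := fun h =>
    (((convex_convexHull ℝ _).mem_extremePoints_iff_mem_sdiff_convexHull_sdiff).1 hq).2
      (convexHull_mono (Set.sdiff_subset_sdiff_left (subset_convexHull ℝ _)) h)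
  have hclosed : IsClosed (convexHull ℝ ((S : Set E) \ {q})) :=
    (S.finite_toSet.subset Set.sdiff_subset).isClosed_convexHull ℝ
  obtain ⟨f, u, hfu, huq⟩ :=
    geometric_hahn_banach_closed_point (convex_convexHull ℝ _) hclosed hnot
  have hlt : ∀ y ∈ convexHull ℝ ((S : Set E) \ {q}), f y < f q := fun y hy =>
    (hfu y hy).trans huq
  have hunique : ∀ x ∈ convexHull ℝ (S : Set E), x = q ∨ f x < f q := by
    intro x hx
    rw [← Set.insert_sdiff_self_of_mem hqS] at hx
    rcases Set.eq_empty_or_nonempty ((S : Set E) \ {q}) with hempty | hne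
    · left
      simpa [hempty] using hx
    · rw [convexHull_insert hne, mem_convexJoin] at hx
      obtain ⟨_, rfl, y, hy, a, b, ha, hb, hab, rfl⟩ := hx
      rcases hb.eq_or_lt with rfl | hb
      · left
        simp [show a = 1 by linarith]
      · right
        obtain rfl : a = 1 - b := by linarith
        simp only [map_add, map_smul, smul_eq_mul]
        linarith [mul_lt_mul_of_pos_left (hlt y hy) hb]
  refine ⟨f, ?_⟩
  ext x
  constructor
  · rintro rfl
    refine ⟨hq.1, fun y hy => ?_⟩
    rcases hunique y hy with rfl | h
    exacts [le_rfl, h.le]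
  · rintro ⟨hx, hmax⟩
    exact (hunique x hx).resolve_right (hmax q hq.1).not_gt

theorem segment_prodMk_right (α β : E) (q : F) :
    segment ℝ (α, q) (β, q) = segment ℝ α β ×ˢ {q} := by
  rw [← Prod.image_mk_segment_left, Set.prod_singleton]

theorem RhombusPair.prodMk_right {P : Set E} {Q : Set F} {α β : E} {q : F}
    (h : RhombusPair P α β) (hq : q ∈ Q.extremePoints ℝ) (hexp : IsExposed ℝ Q {q}) :
    RhombusPair (P ×ˢ Q) (α, q) (β, q) := by
  rcases h with h | ⟨α', hα', β', hβ', h₁, h₂, h₃, h₄, hsum⟩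
  · left
    rw [segment_prodMk_right]
    exact h.prod hexp
  · right
    rw [extremePoints_prod]
    exact ⟨(α', q), ⟨hα', hq⟩, (β', q), ⟨hβ', hq⟩, fun h => h₁ (congrArg Prod.fst h),
      fun h => h₂ (congrArg Prod.fst h), fun h => h₃ (congrArg Prod.fst h),
      fun h => h₄ (congrArg Prod.fst h), Prod.ext hsum rfl⟩

theorem IsExposed.of_prod_singleton {P A : Set E} {Q : Set F} {q : F} (hq : q ∈ Q)
    (h : IsExposed ℝ (P ×ˢ Q) (A ×ˢ {q})) : IsExposed ℝ P A := by
  rintro ⟨a, ha⟩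
  obtain ⟨l, hl⟩ := h ⟨(a, q), ha, rfl⟩
  have hsplit : ∀ x y, l (x, y) = l (x, 0) + l (0, y) := fun x y => by
    rw [← map_add]; simp
  have hmem : ∀ x, x ∈ A ↔ x ∈ P ∧ ∀ y ∈ P ×ˢ Q, l y ≤ l (x, q) := fun x => by
    have := Set.ext_iff.1 hl (x, q)
    simpa [hq] using this
  refine ⟨l.comp (ContinuousLinearMap.inl ℝ E F), ?_⟩
  ext x
  constructor
  · intro hx
    obtain ⟨hxP, hmax⟩ := (hmem x).1 hx
    refine ⟨hxP, fun y hy => ?_⟩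
    have := hmax (y, q) ⟨hy, hq⟩
    rw [hsplit y, hsplit x] at this
    simpa using this
  · rintro ⟨hxP, hmax⟩
    obtain ⟨haP, hamax⟩ := (hmem a).1 ha
    refine (hmem x).2 ⟨hxP, fun y hy => (hamax y hy).trans ?_⟩
    have := hmax a haP
    rw [hsplit a, hsplit x]
    simpa using this

theorem eq_and_eq_of_add_self_eq_of_mem_extremePoints {Q : Set F} {q a b : F}
    (hq : q ∈ Q.extremePoints ℝ) (ha : a ∈ Q) (hb : b ∈ Q) (h : q + q = a + b) :
    a = q ∧ b = q := by
  have haq : a = q := hq.2 ha hb ⟨1 / 2, 1 / 2, by norm_num, by norm_num, by norm_num, by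
    rw [← smul_add, ← h, ← two_smul ℝ q, smul_smul]
    norm_num⟩
  subst haq
  exact ⟨rfl, (add_left_cancel h).symm⟩

theorem FulfillsRhombus.fst_of_prod {P : Set E} {Q : Set F} (h : FulfillsRhombus (P ×ˢ Q))
    (hQ : (Q.extremePoints ℝ).Nonempty) : FulfillsRhombus P := by
  obtain ⟨q, hq⟩ := hQ
  intro α hα β hβ hne
  unfold FulfillsRhombus at h
  rw [extremePoints_prod] at h
  rcases h (α, q) ⟨hα, hq⟩ (β, q) ⟨hβ, hq⟩ (fun h => hne (congrArg Prod.fst h)) with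
    h | ⟨⟨α', a⟩, ⟨hα', ha⟩, ⟨β', b⟩, ⟨hβ', hb⟩, h₁, h₂, h₃, h₄, hsum⟩
  · left
    rw [segment_prodMk_right] at h
    exact h.of_prod_singleton hq.1
  · right
    obtain ⟨rfl, rfl⟩ := eq_and_eq_of_add_self_eq_of_mem_extremePoints hq ha.1 hb.1
      (congrArg Prod.snd hsum)
    exact ⟨α', hα', β', hβ', fun h => h₁ (by rw [h]), fun h => h₂ (by rw [h]),
      fun h => h₃ (by rw [h]), fun h => h₄ (by rw [h]), congrArg Prod.fst hsum⟩

theorem FulfillsRhombus.prod {P : Set E} {Q : Set F} (hP : FulfillsRhombus P)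
    (hQ : FulfillsRhombus Q) (hPexp : ∀ p ∈ P.extremePoints ℝ, IsExposed ℝ P {p})
    (hQexp : ∀ q ∈ Q.extremePoints ℝ, IsExposed ℝ Q {q}) : FulfillsRhombus (P ×ˢ Q) := by
  rintro ⟨α₁, α₂⟩ hα ⟨β₁, β₂⟩ hβ hne
  rw [extremePoints_prod] at hα hβ
  obtain ⟨hα₁, hα₂⟩ := hα
  obtain ⟨hβ₁, hβ₂⟩ := hβ
  dsimp only at hα₁ hα₂ hβ₁ hβ₂
  by_cases h₂ : α₂ = β₂
  · subst h₂
    have h₁ : α₁ ≠ β₁ := fun h => hne (by rw [h])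
    exact RhombusPair.prodMk_right (hP α₁ hα₁ β₁ hβ₁ h₁) hα₂ (hQexp _ hα₂)
  · by_cases h₁ : α₁ = β₁
    · subst h₁
      exact (RhombusPair.prodMk_right (hQ α₂ hα₂ β₂ hβ₂ h₂) hα₁ (hPexp _ hα₁)).prod_swap
    · right
      rw [extremePoints_prod]
      exact ⟨(α₁, β₂), ⟨hα₁, hβ₂⟩, (β₁, α₂), ⟨hβ₁, hα₂⟩, by simp [Ne.symm h₂], by simp [h₁],
        by simp [Ne.symm h₁], by simp [h₂], by simp [add_comm]⟩

theorem extremePoints_convexHull_finset_nonempty {S : Finset E} (hS : S.Nonempty) :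
    ((convexHull ℝ (S : Set E)).extremePoints ℝ).Nonempty :=
  (S.finite_toSet.isCompact_convexHull ℝ).extremePoints_nonempty hS.to_set.convexHull

end

theorem stmt_5 {E F : Type*} [NormedAddCommGroup E] [NormedSpace ℝ E]
    [NormedAddCommGroup F] [NormedSpace ℝ F]
    (P : Set E) (Q : Set F)
    (hP : ∃ S : Finset E, S.Nonempty ∧ P = convexHull ℝ ↑S)
    (hQ : ∃ S : Finset F, S.Nonempty ∧ Q = convexHull ℝ ↑S) :
    FulfillsRhombus (P ×ˢ Q) ↔ FulfillsRhombus P ∧ FulfillsRhombus Q := by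
  obtain ⟨S, hS, rfl⟩ := hP
  obtain ⟨T, hT, rfl⟩ := hQ
  exact ⟨fun h => ⟨h.fst_of_prod (extremePoints_convexHull_finset_nonempty hT),
      h.prod_swap.fst_of_prod (extremePoints_convexHull_finset_nonempty hS)⟩,
    fun h => h.1.prod h.2
      (fun _ => isExposed_singleton_of_mem_extremePoints_convexHull S)
      (fun _ => isExposed_singleton_of_mem_extremePoints_convexHull T)⟩
end

section
/- The k-assignment polytope M_{m,n,k} fulfills the rhombus criterion: for any two vertices α, β of M_{m,n,k} such that conv(α, β) is not an edge of M_{m,n,k}, there exist vertices α', β' of M_{m,n,k} outside {α, β} with α + β = α' + β'. -/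
/-- `x` is a vertex of the `k`-assignment polytope: a 0/1 `m × n` matrix with exactly `k`
ones, no two in the same row or column (equivalently, a `k`-matching in `K_{m,n}`). -/
def IsAssignmentVec (m n k : ℕ) (x : EuclideanSpace ℝ (Fin m × Fin n)) : Prop :=
  ∃ M : Finset (Fin m × Fin n), M.card = k ∧
    (∀ p ∈ M, ∀ q ∈ M, p.1 = q.1 → p = q) ∧
    (∀ p ∈ M, ∀ q ∈ M, p.2 = q.2 → p = q) ∧
    (∀ p, x p = if p ∈ M then 1 else 0)

/-- The `k`-assignment polytope `M_{m,n,k}`. -/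
noncomputable def assignmentPolytope (m n k : ℕ) : Set (EuclideanSpace ℝ (Fin m × Fin n)) :=
  convexHull ℝ {x | IsAssignmentVec m n k x}

section Matching

variable {ι κ : Type*} [DecidableEq κ]

/-- The members of `M` whose image lies in the image of both `A` and `B`. -/
def Finset.commonFiber (f : ι → κ) (A B M : Finset ι) : Finset ι :=
  {p ∈ M | f p ∈ A.image f ∩ B.image f}

lemma Finset.image_commonFiber_subset (f : ι → κ) (A B M : Finset ι) :
    (Finset.commonFiber f A B M).image f ⊆ A.image f ∩ B.image f := by
  intro y hy
  obtain ⟨p, hp, rfl⟩ := Finset.mem_image.1 hy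
  exact (Finset.mem_filter.1 hp).2

lemma Finset.card_image_commonFiber {f : ι → κ} {M : Finset ι} (A B : Finset ι)
    (hM : Set.InjOn f M) :
    ((Finset.commonFiber f A B M).image f).card = (Finset.commonFiber f A B M).card :=
  Finset.card_image_of_injOn (hM.mono fun _ hp => (Finset.mem_filter.1 hp).1)

lemma Finset.card_commonFiber_le {f : ι → κ} {M : Finset ι} (A B : Finset ι)
    (hM : Set.InjOn f M) :
    (Finset.commonFiber f A B M).card ≤ (A.image f ∩ B.image f).card := by
  rw [← Finset.card_image_commonFiber A B hM]
  exact Finset.card_le_card (Finset.image_commonFiber_subset f A B M)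

lemma Finset.subset_image_of_card_commonFiber {f : ι → κ} {A B M : Finset ι}
    (hM : Set.InjOn f M)
    (h : (A.image f ∩ B.image f).card ≤ (Finset.commonFiber f A B M).card) :
    A.image f ∩ B.image f ⊆ M.image f := by
  rw [← Finset.card_image_commonFiber A B hM] at h
  rw [← Finset.eq_of_subset_of_card_le (Finset.image_commonFiber_subset f A B M) h]
  exact Finset.image_subset_image (Finset.filter_subset _ _)

lemma Finset.card_commonFiber_eq {f : ι → κ} {A B M : Finset ι} (hM : Set.InjOn f M)
    (h : A.image f ∩ B.image f ⊆ M.image f) :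
    (Finset.commonFiber f A B M).card = (A.image f ∩ B.image f).card := by
  rw [← Finset.card_image_commonFiber A B hM]
  congr 1
  refine (Finset.image_commonFiber_subset f A B M).antisymm fun y hy => ?_
  obtain ⟨p, hp, rfl⟩ := Finset.mem_image.1 (h hy)
  exact Finset.mem_image_of_mem f (Finset.mem_filter.2 ⟨hp, hy⟩)

variable [DecidableEq ι]

/-- The complement of `M` in the multiset sum `A + B`, when `A ∩ B ⊆ M ⊆ A ∪ B`. -/
def Finset.sumCompl (A B M : Finset ι) : Finset ι := (A ∪ B) \ M ∪ A ∩ B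

lemma Finset.inter_subset_of_image_inter_subset {f : ι → κ} {A B M : Finset ι}
    (hA : Set.InjOn f A) (hB : Set.InjOn f B) (hM : M ⊆ A ∪ B)
    (h : A.image f ∩ B.image f ⊆ M.image f) : A ∩ B ⊆ M := by
  intro p hp
  obtain ⟨hpA, hpB⟩ := Finset.mem_inter.1 hp
  obtain ⟨q, hq, hqp⟩ := Finset.mem_image.1
    (h (Finset.mem_inter.2 ⟨Finset.mem_image_of_mem f hpA, Finset.mem_image_of_mem f hpB⟩))
  rcases Finset.mem_union.1 (hM hq) with hqA | hqB
  · exact hA hqA hpA hqp ▸ hq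
  · exact hB hqB hpB hqp ▸ hq

lemma Finset.injOn_sumCompl {f : ι → κ} {A B M : Finset ι}
    (hA : Set.InjOn f A) (hB : Set.InjOn f B) (hM : M ⊆ A ∪ B)
    (h : A.image f ∩ B.image f ⊆ M.image f) : Set.InjOn f (Finset.sumCompl A B M) := by
  have key : ∀ p ∈ Finset.sumCompl A B M, ∀ q ∈ Finset.sumCompl A B M, p ∈ A → q ∈ B →
      f p = f q → p = q := by
    intro p hp q hq hpA hqB hpq
    obtain ⟨r, hr, hrp⟩ := Finset.mem_image.1
      (h (Finset.mem_inter.2 ⟨Finset.mem_image_of_mem f hpA,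
        hpq ▸ Finset.mem_image_of_mem f hqB⟩))
    simp only [Finset.sumCompl, Finset.mem_union, Finset.mem_sdiff, Finset.mem_inter] at hp hq
    rcases Finset.mem_union.1 (hM hr) with hrA | hrB
    · obtain rfl := hA hrA hpA hrp
      exact hB (by simp only [Finset.mem_coe]; tauto) hqB hpq
    · obtain rfl := hB hrB hqB (hrp.trans hpq)
      exact hA hpA (by simp only [Finset.mem_coe]; tauto) hpq
  have hsub : ∀ p ∈ Finset.sumCompl A B M, p ∈ A ∨ p ∈ B := by
    intro p hp
    simp only [Finset.sumCompl, Finset.mem_union, Finset.mem_sdiff, Finset.mem_inter] at hp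
    tauto
  intro p hp q hq hpq
  rcases hsub p hp with hpA | hpB <;> rcases hsub q hq with hqA | hqB
  · exact hA hpA hqA hpq
  · exact key p hp q hq hpA hqB hpq
  · exact (key q hq p hp hqA hpB hpq.symm).symm
  · exact hB hpB hqB hpq

lemma Finset.card_add_card_sumCompl {A B M : Finset ι} (hM : M ⊆ A ∪ B) (h : A ∩ B ⊆ M) :
    M.card + (Finset.sumCompl A B M).card = A.card + B.card := by
  have hunion : M ∪ Finset.sumCompl A B M = A ∪ B := by
    ext p
    have h1 := @hM p
    simp only [Finset.sumCompl, Finset.mem_union, Finset.mem_sdiff, Finset.mem_inter] at h1 ⊢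
    tauto
  have hinter : M ∩ Finset.sumCompl A B M = A ∩ B := by
    ext p
    have h1 := @h p
    simp only [Finset.sumCompl, Finset.mem_union, Finset.mem_sdiff, Finset.mem_inter] at h1 ⊢
    tauto
  rw [← Finset.card_union_add_card_inter, hunion, hinter, Finset.card_union_add_card_inter]

lemma Finset.indicator_add_indicator_sumCompl {A B M : Finset ι} (hM : M ⊆ A ∪ B)
    (h : A ∩ B ⊆ M) (p : ι) :
    ((if p ∈ A then 1 else 0) + (if p ∈ B then 1 else 0) : ℝ) =
      (if p ∈ M then 1 else 0) + (if p ∈ Finset.sumCompl A B M then 1 else 0) := by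
  have h1 := @hM p
  have h2 := @h p
  simp only [Finset.sumCompl, Finset.mem_union, Finset.mem_sdiff, Finset.mem_inter] at h1 h2 ⊢
  by_cases hA : p ∈ A <;> by_cases hB : p ∈ B <;> by_cases hp : p ∈ M <;> simp_all

end Matching

/-- If `l ≤ c` on `S` and the points of `S` with `l = c` lie in a convex set `T`, then so do the
points of the convex hull of `S` with `l = c`. -/
lemma mem_of_mem_convexHull_of_eq_max {E : Type*} [AddCommGroup E] [Module ℝ E] {S T : Set E}
    (hT : Convex ℝ T) (l : E →ₗ[ℝ] ℝ) (c : ℝ) (hS : ∀ x ∈ S, l x ≤ c ∧ (l x = c → x ∈ T))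
    {x : E} (hx : x ∈ convexHull ℝ S) : l x ≤ c ∧ (l x = c → x ∈ T) := by
  refine convexHull_min (t := {x | l x ≤ c ∧ (l x = c → x ∈ T)}) hS ?_ hx
  refine convex_iff_forall_pos.2 ?_
  rintro x ⟨hx, hxT⟩ y ⟨hy, hyT⟩ a b ha hb hab
  simp only [Set.mem_ofPred_eq, map_add, map_smul, smul_eq_mul]
  have h1 : 0 ≤ a * (c - l x) := mul_nonneg ha.le (sub_nonneg.2 hx)
  have h2 : 0 ≤ b * (c - l y) := mul_nonneg hb.le (sub_nonneg.2 hy)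
  have h3 : a * (c - l x) + b * (c - l y) = c - (a * l x + b * l y) := by
    linear_combination c * hab
  refine ⟨by linarith, fun h => ?_⟩
  have hx0 : a * (c - l x) = 0 := by linarith
  have hy0 : b * (c - l y) = 0 := by linarith
  have hx' : l x = c := by
    rcases mul_eq_zero.1 hx0 with h | h <;> linarith
  have hy' : l y = c := by
    rcases mul_eq_zero.1 hy0 with h | h <;> linarith
  exact hT (hxT hx') (hyT hy') ha.le hb.le hab

/-- The segment between two points of `S` is exposed in the convex hull of `S` as soon as some
functional attains its maximum over `S` at both points and only at points of the segment. -/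
lemma isExposed_segment_convexHull {E : Type*} [AddCommGroup E] [Module ℝ E]
    [TopologicalSpace E] {S : Set E} {α β : E} (hα : α ∈ S) (hβ : β ∈ S) (l : StrongDual ℝ E)
    (c : ℝ) (hlα : l α = c) (hlβ : l β = c)
    (hS : ∀ x ∈ S, l x ≤ c ∧ (l x = c → x ∈ segment ℝ α β)) :
    IsExposed ℝ (convexHull ℝ S) (segment ℝ α β) := by
  have hhull {x : E} (hx : x ∈ convexHull ℝ S) : l x ≤ c ∧ (l x = c → x ∈ segment ℝ α β) :=
    mem_of_mem_convexHull_of_eq_max (convex_segment α β) l.toLinearMap c hS hx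
  refine fun _ => ⟨l, Set.ext fun x => ⟨fun hx => ⟨?_, fun y hy => ?_⟩, fun hx => ?_⟩⟩
  · exact segment_subset_convexHull hα hβ hx
  · obtain ⟨a, b, -, -, hab, rfl⟩ := hx
    have : l (a • α + b • β) = c := by
      simp only [map_add, map_smul, smul_eq_mul, hlα, hlβ]
      linear_combination c * hab
    exact this ▸ (hhull hy).1
  · exact (hhull hx.1).2
      ((hhull hx.1).1.antisymm (hlα ▸ hx.2 α (subset_convexHull ℝ S hα)))

/-- The number of members of `M` in `A ∪ B`, plus the number of incidences of `M` with rows and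
columns met by both `A` and `B`. -/
def assignmentWeight {m n : ℕ} (A B M : Finset (Fin m × Fin n)) : ℕ :=
  (M ∩ (A ∪ B)).card + (Finset.commonFiber Prod.fst A B M).card +
    (Finset.commonFiber Prod.snd A B M).card

lemma exists_functional_eq_assignmentWeight {m n : ℕ} (A B : Finset (Fin m × Fin n)) :
    ∃ l : StrongDual ℝ (EuclideanSpace ℝ (Fin m × Fin n)),
      ∀ (M : Finset (Fin m × Fin n)) (x : EuclideanSpace ℝ (Fin m × Fin n)),
        (∀ p, x p = if p ∈ M then 1 else 0) → l x = assignmentWeight A B M := by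
  refine ⟨∑ p ∈ A ∪ B, EuclideanSpace.proj p +
    ∑ p with p.1 ∈ A.image Prod.fst ∩ B.image Prod.fst, EuclideanSpace.proj p +
    ∑ p with p.2 ∈ A.image Prod.snd ∩ B.image Prod.snd, EuclideanSpace.proj p,
    fun M x hx => ?_⟩
  have key (s : Finset (Fin m × Fin n)) :
      (∑ p ∈ s, (EuclideanSpace.proj p : StrongDual ℝ (EuclideanSpace ℝ (Fin m × Fin n)))) x = ((M ∩ s).card : ℝ) := by
    simp [hx, Finset.inter_comm]
  have hfilter (P : Fin m × Fin n → Prop) [DecidablePred P] :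
      M ∩ Finset.univ.filter P = M.filter P := by
    ext p; simp
  rw [add_apply, add_apply, key, key, key,
    hfilter, hfilter]
  simp only [assignmentWeight, Finset.commonFiber, Nat.cast_add]

theorem stmt_16 {m n k : ℕ} (α β : EuclideanSpace ℝ (Fin m × Fin n))
    (hα : IsAssignmentVec m n k α) (hβ : IsAssignmentVec m n k β)
    (hnonedge : ¬ IsExposed ℝ (assignmentPolytope m n k) (segment ℝ α β)) :
    ∃ α' β' : EuclideanSpace ℝ (Fin m × Fin n),
      IsAssignmentVec m n k α' ∧ IsAssignmentVec m n k β' ∧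
      α' ≠ α ∧ α' ≠ β ∧ β' ≠ α ∧ β' ≠ β ∧ α + β = α' + β' := by
  by_contra hcon
  apply hnonedge
  obtain ⟨A, hAk, hA1, hA2, hAx⟩ := id hα
  obtain ⟨B, hBk, hB1, hB2, hBx⟩ := id hβ
  replace hA1 : Set.InjOn Prod.fst (A : Set (Fin m × Fin n)) := fun p hp q hq => hA1 p hp q hq
  replace hA2 : Set.InjOn Prod.snd (A : Set (Fin m × Fin n)) := fun p hp q hq => hA2 p hp q hq
  replace hB1 : Set.InjOn Prod.fst (B : Set (Fin m × Fin n)) := fun p hp q hq => hB1 p hp q hq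
  replace hB2 : Set.InjOn Prod.snd (B : Set (Fin m × Fin n)) := fun p hp q hq => hB2 p hp q hq
  obtain ⟨l, hl⟩ := exists_functional_eq_assignmentWeight A B
  refine isExposed_segment_convexHull hα hβ l
    ((k + (A.image Prod.fst ∩ B.image Prod.fst).card +
      (A.image Prod.snd ∩ B.image Prod.snd).card : ℕ) : ℝ) ?_ ?_ ?_
  · rw [hl A α hAx, assignmentWeight, Finset.card_commonFiber_eq hA1 Finset.inter_subset_left,
      Finset.card_commonFiber_eq hA2 Finset.inter_subset_left,
      Finset.inter_eq_left.2 Finset.subset_union_left, hAk]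
  · rw [hl B β hBx, assignmentWeight, Finset.card_commonFiber_eq hB1 Finset.inter_subset_right,
      Finset.card_commonFiber_eq hB2 Finset.inter_subset_right,
      Finset.inter_eq_left.2 Finset.subset_union_right, hBk]
  rintro x ⟨M, hMk, hM1, hM2, hMx⟩
  replace hM1 : Set.InjOn Prod.fst (M : Set (Fin m × Fin n)) := fun p hp q hq => hM1 p hp q hq
  replace hM2 : Set.InjOn Prod.snd (M : Set (Fin m × Fin n)) := fun p hp q hq => hM2 p hp q hq
  have hcard : (M ∩ (A ∪ B)).card ≤ k := hMk ▸ Finset.card_le_card Finset.inter_subset_left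
  have hrow := Finset.card_commonFiber_le A B hM1
  have hcol := Finset.card_commonFiber_le A B hM2
  rw [hl M x hMx, Nat.cast_le, Nat.cast_inj, assignmentWeight]
  refine ⟨by omega, fun heq => ?_⟩
  have hMAB : M ⊆ A ∪ B := Finset.inter_eq_left.1
    (Finset.eq_of_subset_of_card_le Finset.inter_subset_left (by omega))
  have hR := Finset.subset_image_of_card_commonFiber (A := A) (B := B) hM1 (by omega)
  have hC := Finset.subset_image_of_card_commonFiber (A := A) (B := B) hM2 (by omega)
  have hABM := Finset.inter_subset_of_image_inter_subset hA1 hB1 hMAB hR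
  have hcompl := Finset.card_add_card_sumCompl hMAB hABM
  have hcompl1 := Finset.injOn_sumCompl hA1 hB1 hMAB hR
  have hcompl2 := Finset.injOn_sumCompl hA2 hB2 hMAB hC
  by_cases hxα : x = α
  · exact hxα ▸ left_mem_segment ℝ α β
  by_cases hxβ : x = β
  · exact hxβ ▸ right_mem_segment ℝ α β
  have hy (p : Fin m × Fin n) :
      (α + β - x) p = if p ∈ Finset.sumCompl A B M then 1 else 0 := by
    have := Finset.indicator_add_indicator_sumCompl hMAB hABM p
    rw [PiLp.sub_apply, PiLp.add_apply, hAx, hBx, hMx]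
    linarith
  refine absurd ⟨x, α + β - x, ⟨M, hMk, fun p hp q hq => hM1 hp hq, fun p hp q hq => hM2 hp hq,
    hMx⟩, ⟨Finset.sumCompl A B M, by omega, fun p hp q hq => hcompl1 hp hq,
    fun p hp q hq => hcompl2 hp hq, hy⟩, hxα, hxβ, fun h => hxβ ?_, fun h => hxα ?_, by abel⟩ hcon
  · exact (add_left_cancel (a := α) (by rw [← sub_eq_iff_eq_add.1 h])).symm
  · exact (add_right_cancel (b := β) (by rw [sub_eq_iff_eq_add.1 h, add_comm])).symm
end
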